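/- For every integer n > 1, there exists a DWA over {a, b, i} with exactly n + 2 states that realizes O_n; one such DWA is the chain with states q_0, …, q_n, s, transitions δ(q_j, x) = q_{j+1} for j < n and δ(q_n, x) = δ(s, x) = s for every letter x, and weights c(q_j, i) = 0, c(q_j, a) = −c(q_j, b) = 2^{n−1−j} for j < n, c(q_n, a) = −c(q_n, b) = 1, c(q_n, i) = 0, and c(s, x) = 0 for every letter x. -/

import Mathlib

/-- A deterministic weighted automaton (DWA) over alphabet `A` with state space `Q`. -/
structure DWA (A : Type) (Q : Type) where
  init : Q
  δ : Q → A → Q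
  c : Q → A → ℤ

/-- The extended transition function `δ̂`. -/
def DWA.run {A Q : Type} (M : DWA A Q) (q : Q) (w : List A) : Q :=
  w.foldl M.δ q

/-- The accumulated weight of the run on `w` starting in state `q`. -/
def DWA.valFrom {A Q : Type} (M : DWA A Q) : Q → List A → ℤ
  | _, [] => 0
  | q, x :: w => M.c q x + M.valFrom (M.δ q x) w

/-- The value `A(w)` of a word: the sum of the weights along the run from the initial state. -/
def DWA.val {A Q : Type} (M : DWA A Q) (w : List A) : ℤ :=
  M.valFrom M.init w

/-- The three-letter alphabet `{a, b, i}`. -/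
inductive ABI where
  | a : ABI
  | b : ABI
  | i : ABI
deriving DecidableEq

open Classical in
/-- The observation function `O_n` on nonempty words over `{a, b, i}`:
`O_n(w) = 1` if `w` consists only of `i`'s, or `i^{n+1}` is a prefix of `w`, or
`i^k·a·b^{n-k}` or `i^k·b·a^{n-k}` is a prefix of `w` for some `k < n`; otherwise `O_n(w) = 2`
if the first letter of `w` different from `i` is `a`, and `O_n(w) = 0` if it is `b`. -/
noncomputable def Obs (n : ℕ) (w : List ABI) : ℕ :=
  if (∀ x ∈ w, x = ABI.i) ∨
      (List.replicate (n + 1) ABI.i <+: w) ∨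
      (∃ k < n, List.replicate k ABI.i ++ [ABI.a] ++ List.replicate (n - k) ABI.b <+: w) ∨
      (∃ k < n, List.replicate k ABI.i ++ [ABI.b] ++ List.replicate (n - k) ABI.a <+: w)
  then 1
  else if ∃ k, List.replicate k ABI.i ++ [ABI.a] <+: w then 2
  else 0

/-- A DWA `M` over `{a, b, i}` realizes `O_n` if, for every nonempty word `w`,
`M(w) < 0 ↔ O_n(w) = 0`, `M(w) = 0 ↔ O_n(w) = 1`, and `M(w) > 0 ↔ O_n(w) = 2`. -/
def Realizes {Q : Type} (n : ℕ) (M : DWA ABI Q) : Prop :=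
  ∀ w : List ABI, w ≠ [] →
    (M.val w < 0 ↔ Obs n w = 0) ∧ (M.val w = 0 ↔ Obs n w = 1) ∧ (0 < M.val w ↔ Obs n w = 2)

/-- Weight of a letter when `r` further active states follow. -/
def chW : ℕ → ℤ
  | 0 => 1
  | r + 1 => 2 ^ r

/-- Sign of a letter. -/
def chS (x : ABI) : ℤ :=
  if x = ABI.a then 1 else if x = ABI.b then -1 else 0

/-- Value of a word read with `r` active states left. -/
def chV : ℕ → List ABI → ℤ
  | 0, _ => 0
  | _ + 1, [] => 0
  | r + 1, x :: w => chS x * chW r + chV r w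

/-- The condition for observation `1`, with `r = n + 1`. -/
def chC (r : ℕ) (w : List ABI) : Prop :=
  (∀ x ∈ w, x = ABI.i) ∨
      (List.replicate r ABI.i <+: w) ∨
      (∃ k, k + 1 < r ∧
        List.replicate k ABI.i ++ [ABI.a] ++ List.replicate (r - 1 - k) ABI.b <+: w) ∨
      (∃ k, k + 1 < r ∧
        List.replicate k ABI.i ++ [ABI.b] ++ List.replicate (r - 1 - k) ABI.a <+: w)

lemma chW_pos (r : ℕ) : 0 < chW r := by
  cases r <;> simp [chW]

lemma chW_succ (r : ℕ) : chW (r + 1 + 1) = 2 * chW (r + 1) := by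
  simp [chW, pow_succ]; ring

lemma chV_lower (r : ℕ) : ∀ w : List ABI, 0 ≤ chV r w + chW r ∧
    (chV r w + chW r = 0 ↔ 1 ≤ r ∧ List.replicate r ABI.b <+: w) := by
  induction r with
  | zero => intro w; simp [chV, chW]
  | succ r ih =>
    intro w
    cases w with
    | nil =>
      have := chW_pos (r + 1)
      simp [chV, List.replicate_succ]
      omega
    | cons x w =>
      obtain ⟨h1, h2⟩ := ih w
      have hp := chW_pos r
      cases r with
      | zero => cases x <;> simp [chV, chW, chS, List.replicate_succ]
      | succ r =>
        have hs := chW_succ r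
        rw [List.replicate_succ, List.cons_prefix_cons, chV, hs]
        cases x <;> simp [chS] at h2 ⊢
        · omega
        · rw [← h2]; omega
        · omega

lemma chV_upper (r : ℕ) : ∀ w : List ABI, 0 ≤ chW r - chV r w ∧
    (chW r - chV r w = 0 ↔ 1 ≤ r ∧ List.replicate r ABI.a <+: w) := by
  induction r with
  | zero => intro w; simp [chV, chW]
  | succ r ih =>
    intro w
    cases w with
    | nil =>
      have := chW_pos (r + 1)
      simp [chV, List.replicate_succ]
      omega
    | cons x w =>
      obtain ⟨h1, h2⟩ := ih w
      have hp := chW_pos r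
      cases r with
      | zero => cases x <;> simp [chV, chW, chS, List.replicate_succ]
      | succ r =>
        have hs := chW_succ r
        rw [List.replicate_succ, List.cons_prefix_cons, chV, hs]
        cases x <;> simp [chS] at h2 ⊢
        · rw [← h2]; omega
        · omega
        · omega

lemma ex_cons_i (r : ℕ) (y z : ABI) (hy : y ≠ ABI.i) (w : List ABI) :
    (∃ k, k + 1 < r + 1 ∧
        List.replicate k ABI.i ++ [y] ++ List.replicate (r + 1 - 1 - k) z <+: ABI.i :: w) ↔
    (∃ k, k + 1 < r ∧
        List.replicate k ABI.i ++ [y] ++ List.replicate (r - 1 - k) z <+: w) := by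
  constructor
  · rintro ⟨k, hk, h⟩
    cases k with
    | zero => simp [hy] at h
    | succ k =>
      refine ⟨k, by omega, ?_⟩
      rw [show r + 1 - 1 - (k + 1) = r - 1 - k by omega] at h
      simpa [List.replicate_succ] using h
  · rintro ⟨k, hk, h⟩
    refine ⟨k + 1, by omega, ?_⟩
    rw [show r + 1 - 1 - (k + 1) = r - 1 - k by omega]
    simpa [List.replicate_succ] using h

lemma ex_cons_ne (r : ℕ) (x y z : ABI) (hx : x ≠ ABI.i) (w : List ABI) :
    (∃ k, k + 1 < r + 1 ∧
        List.replicate k ABI.i ++ [y] ++ List.replicate (r + 1 - 1 - k) z <+: x :: w) ↔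
    (y = x ∧ 1 ≤ r ∧ List.replicate r z <+: w) := by
  constructor
  · rintro ⟨k, hk, h⟩
    cases k with
    | zero =>
      simp at h
      exact ⟨h.1, by omega, h.2⟩
    | succ k => simp [List.replicate_succ, hx.symm] at h
  · rintro ⟨rfl, hk, h⟩
    exact ⟨0, by omega, by simpa using h⟩

lemma ch_main (r : ℕ) : ∀ w : List ABI, (chV r w = 0 ↔ chC r w) ∧
    (¬ chC r w → ((0 < chV r w ↔ ∃ k, List.replicate k ABI.i ++ [ABI.a] <+: w))) := by
  induction r with
  | zero => intro w; simp [chV, chC]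
  | succ r ih =>
    intro w
    cases w with
    | nil => simp [chV, chC]
    | cons x w =>
      obtain ⟨h1, h2⟩ := ih w
      obtain ⟨l1, l2⟩ := chV_lower r w
      obtain ⟨u1, u2⟩ := chV_upper r w
      cases x with
      | i =>
        have hC : chC (r + 1) (ABI.i :: w) ↔ chC r w := by
          unfold chC
          rw [ex_cons_i _ _ _ (by simp), ex_cons_i _ _ _ (by simp)]
          simp [List.replicate_succ]
        have hE : (∃ k, List.replicate k ABI.i ++ [ABI.a] <+: ABI.i :: w) ↔
            ∃ k, List.replicate k ABI.i ++ [ABI.a] <+: w := by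
          constructor
          · rintro ⟨k, h⟩
            cases k with
            | zero => simp at h
            | succ k => exact ⟨k, by simpa [List.replicate_succ] using h⟩
          · rintro ⟨k, h⟩
            exact ⟨k + 1, by simpa [List.replicate_succ] using h⟩
        rw [hC, hE]
        simpa [chV, chS] using ⟨h1, h2⟩
      | a =>
        have hC : chC (r + 1) (ABI.a :: w) ↔ chV r w + chW r = 0 := by
          unfold chC
          rw [ex_cons_ne _ _ _ _ (by simp), ex_cons_ne _ _ _ _ (by simp), l2]
          simp [List.replicate_succ]
        have hE : (∃ k, List.replicate k ABI.i ++ [ABI.a] <+: ABI.a :: w) := ⟨0, by simp⟩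
        rw [hC]
        have hS : chS ABI.a = 1 := by simp [chS]
        simp only [hE, chV, hS, iff_true]
        omega
      | b =>
        have hC : chC (r + 1) (ABI.b :: w) ↔ chW r - chV r w = 0 := by
          unfold chC
          rw [ex_cons_ne _ _ _ _ (by simp), ex_cons_ne _ _ _ _ (by simp), u2]
          simp [List.replicate_succ]
        have hE : ¬ (∃ k, List.replicate k ABI.i ++ [ABI.a] <+: ABI.b :: w) := by
          rintro ⟨k, h⟩
          cases k <;> simp [List.replicate_succ] at h
        rw [hC]
        have hS : chS ABI.b = -1 := by simp [chS]
        simp only [hE, chV, hS, iff_false]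
        omega

/-- the chain DWA with exactly `n + 2` states (states `q_0, …, q_n, s`, where
`q_j = ⟨j, _⟩` and `s = ⟨n+1, _⟩`, every transition from `q_j` goes to `q_{j+1}`, `q_n` and
`s` go to `s`, with weights `c(q_j, i) = 0`, `c(q_j, a) = -c(q_j, b) = 2^{n-1-j}` for `j < n`,
`c(q_n, a) = -c(q_n, b) = 1`, `c(q_n, i) = 0`, and `c(s, ·) = 0`) realizes `O_n`.
In particular, for every `n > 1` some DWA with exactly `n + 2` states realizes `O_n`. -/
theorem chain_dwa_realizes (n : ℕ) (hn : 1 < n) :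
    let δ : Fin (n + 2) → ABI → Fin (n + 2) := fun j _ => ⟨min (j.val + 1) (n + 1), by omega⟩
    let c : Fin (n + 2) → ABI → ℤ := fun j x =>
      if j.val < n then
        (match x with
          | ABI.a => (2 : ℤ) ^ (n - 1 - j.val)
          | ABI.b => -((2 : ℤ) ^ (n - 1 - j.val))
          | ABI.i => 0)
      else if j.val = n then
        (match x with
          | ABI.a => 1
          | ABI.b => -1
          | ABI.i => 0)
      else 0
    let M : DWA ABI (Fin (n + 2)) := ⟨⟨0, by omega⟩, δ, c⟩
    Realizes n M := by
  classical
  intro δ c M w _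
  have key : ∀ (w : List ABI) (j : Fin (n + 2)), M.valFrom j w = chV (n + 1 - j.val) w := by
    intro w
    induction w with
    | nil =>
      intro j
      cases h : n + 1 - j.val <;> simp [DWA.valFrom, chV]
    | cons x w ih =>
      intro j
      rw [DWA.valFrom, ih]
      have hj := j.isLt
      have hd : (M.δ j x).val = min (j.val + 1) (n + 1) := rfl
      rw [hd]
      change c j x + _ = _
      rcases Nat.lt_trichotomy j.val n with h | h | h
      · obtain ⟨m, hm⟩ : ∃ m, n = j.val + m + 1 := ⟨n - j.val - 1, by omega⟩
        rw [show n + 1 - min (j.val + 1) (n + 1) = m + 1 by omega,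
          show n + 1 - j.val = m + 1 + 1 by omega, chV]
        have e : n - 1 - j.val = m := by omega
        cases x <;> simp [c, h, chS, chW, e]
      · rw [show n + 1 - min (j.val + 1) (n + 1) = 0 by omega,
          show n + 1 - j.val = 0 + 1 by omega, chV]
        cases x <;> simp [c, h, chS, chW, chV]
      · rw [show n + 1 - min (j.val + 1) (n + 1) = 0 by omega,
          show n + 1 - j.val = 0 by omega]
        have h3 : ¬ j.val < n := by omega
        have h4 : ¬ j.val = n := by omega
        simp [c, h3, h4, chV]
  have hv : M.val w = chV (n + 1) w := key w ⟨0, by omega⟩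
  rw [hv]
  obtain ⟨h1, h2⟩ := ch_main (n + 1) w
  have hO : Obs n w = if chC (n + 1) w then 1
      else if ∃ k, List.replicate k ABI.i ++ [ABI.a] <+: w then 2 else 0 := by
    unfold Obs chC
    simp only [Nat.add_lt_add_iff_right, Nat.add_sub_cancel]
  rw [hO]
  by_cases hc : chC (n + 1) w
  · have := h1.2 hc
    simp [hc, this]
  · have h3 := h2 hc
    have h4 : chV (n + 1) w ≠ 0 := fun h => hc (h1.1 h)
    by_cases he : ∃ k, List.replicate k ABI.i ++ [ABI.a] <+: w
    · have := h3.2 he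
      rw [if_neg hc, if_pos he]
      omega
    · have : ¬ 0 < chV (n + 1) w := fun h => he (h3.1 h)
      rw [if_neg hc, if_neg he]
      omega
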